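/- arXiv:2301.07472 — 4 statements merged into one kernel-verified Lean document; each statement's English description precedes it below -/
import Mathlib

section
/- There exists a real constant c > 0 such that for every natural number k ≥ 2 there exists a natural number k' with 2^k ≤ k'! and k' ≤ c·k/log₂(k). (The quantitative core of Theorem 'Treewidth-Awareness': the smallest k' whose factorial exceeds 2^k is in O(k/log k).) -/
/-- Quantitative core of Theorem "Treewidth-Awareness": there is a constant `c > 0`
such that for every `k ≥ 2` there is `k'` with `2^k ≤ k'!` and `k' ≤ c·k/log₂ k`. -/
theorem exists_small_kprime_factorial_ge_two_pow :
    ∃ c : ℝ, 0 < c ∧ ∀ k : ℕ, 2 ≤ k → ∃ k' : ℕ,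
      2 ^ k ≤ Nat.factorial k' ∧ (k' : ℝ) ≤ c * (k : ℝ) / Real.logb 2 (k : ℝ) := by
  refine ⟨8, by norm_num, fun k hk => ?_⟩
  have hkR : (2 : ℝ) ≤ k := by exact_mod_cast hk
  have hk0 : (0 : ℝ) < k := by linarith
  set L := Real.logb 2 (k : ℝ) with hL
  have hLpos : 0 < L := Real.logb_pos (by norm_num) (by linarith)
  have hkL : (2 : ℝ) ^ L = k := Real.rpow_logb (by norm_num) (by norm_num) hk0
  have hlog : L * Real.log 2 = Real.log k := by
    rw [hL, Real.logb]
    exact div_mul_cancel₀ _ (Real.log_pos (by norm_num)).ne'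
  have hl2 := Real.log_two_gt_d9
  have hL2 : L ≤ 2 * Real.log k := by nlinarith
  have hsq : Real.sqrt k * Real.sqrt k = k := Real.mul_self_sqrt hk0.le
  have hsp : 0 < Real.sqrt k := Real.sqrt_pos.mpr hk0
  have hL3 : L ≤ 4 * Real.sqrt k := by
    have h1 := Real.log_le_sub_one_of_pos hsp
    have h2 := Real.log_sqrt hk0.le
    linarith
  have hL4 : L ≤ 2 * k := by
    have h1 := Real.log_le_sub_one_of_pos hk0
    linarith
  set n := ⌈2 * (k : ℝ) / L⌉₊ with hn
  refine ⟨Nat.sqrt k + n, ?_, ?_⟩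
  · have hnle : 2 * (k : ℝ) ≤ L * n := by
      have := Nat.le_ceil (2 * (k : ℝ) / L)
      rw [div_le_iff₀ hLpos] at this
      linarith
    have h1 : 2 ^ (2 * k) ≤ k ^ n := by
      have : (2 : ℝ) ^ (2 * k) ≤ (k : ℝ) ^ n := by
        rw [← hkL, ← Real.rpow_natCast, ← Real.rpow_mul_natCast (by norm_num)]
        apply Real.rpow_le_rpow_of_exponent_le (by norm_num)
        push_cast
        exact hnle
      exact_mod_cast this
    have h2 : k ≤ (Nat.sqrt k + 1) ^ 2 := (Nat.lt_succ_sqrt' k).le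
    have h3 : (2 ^ k) ^ 2 ≤ ((Nat.sqrt k + 1) ^ n) ^ 2 := by
      calc (2 ^ k) ^ 2 = 2 ^ (2 * k) := by rw [← pow_mul, mul_comm]
        _ ≤ k ^ n := h1
        _ ≤ ((Nat.sqrt k + 1) ^ 2) ^ n := Nat.pow_le_pow_left h2 n
        _ = _ := by rw [← pow_mul, ← pow_mul, mul_comm]
    have h4 := (Nat.pow_le_pow_iff_left (by norm_num)).mp h3
    calc 2 ^ k ≤ (Nat.sqrt k + 1) ^ n := h4
      _ ≤ (Nat.sqrt k).factorial * (Nat.sqrt k + 1) ^ n :=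
        Nat.le_mul_of_pos_left _ (Nat.factorial_pos _)
      _ ≤ _ := Nat.factorial_mul_pow_le_factorial
  · have hc : (n : ℝ) < 2 * (k : ℝ) / L + 1 := Nat.ceil_lt_add_one (by positivity)
    have hs : (Nat.sqrt k : ℝ) ≤ Real.sqrt k := Real.nat_sqrt_le_real_sqrt
    have a1 : Real.sqrt k ≤ 4 * k / L := by
      rw [le_div_iff₀ hLpos]
      nlinarith
    have a2 : 1 ≤ 2 * k / L := by
      rw [le_div_iff₀ hLpos]
      linarith
    have e : 8 * (k : ℝ) / L = 4 * k / L + 2 * k / L + 2 * k / L := by ring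
    push_cast
    linarith
end

section
/- There exists a real constant c > 0 such that for every natural number k ≥ 2 there exists a natural number k' with k' ≤ c·k/log₂(k) and an injective function from (Fin k → Bool) into Equiv.Perm (Fin k'). (Combinatorial core of the paper's Theorem 'Treewidth-Awareness': all 2^k assignments over a bag of k variables can be encoded injectively by orderings of only O(k/log k) ordering vertices.) -/
/-- Combinatorial core of "Treewidth-Awareness": there is `c > 0` such that for every
`k ≥ 2` there is `k' ≤ c·k/log₂ k` and an injection of the `2^k` assignments over
`k` variables into the permutations of `Fin k'`. -/
theorem exists_small_kprime_with_injection :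
    ∃ c : ℝ, 0 < c ∧ ∀ k : ℕ, 2 ≤ k → ∃ k' : ℕ,
      (k' : ℝ) ≤ c * (k : ℝ) / Real.logb 2 (k : ℝ) ∧
      ∃ f : (Fin k → Bool) → Equiv.Perm (Fin k'), Function.Injective f := by
  refine ⟨10, by norm_num, fun k hk => ?_⟩
  have hkr : (2 : ℝ) ≤ k := by exact_mod_cast hk
  have hk0 : (0 : ℝ) < k := by linarith
  have hlk : 0 < Real.log k := Real.log_pos (by linarith)
  have hl2 : 0 < Real.log 2 := Real.log_pos (by norm_num)
  have hl2' := Real.log_two_gt_d9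
  have he := Real.exp_one_lt_d9
  have hL : 0 < Real.logb 2 (k : ℝ) := Real.logb_pos (by norm_num) (by linarith)
  have hLk : Real.logb 2 (k : ℝ) ≤ k := by
    rw [Real.logb_le_iff_le_rpow (by norm_num) hk0, Real.rpow_natCast]
    exact_mod_cast Nat.lt_two_pow_self.le
  set x : ℝ := 9 * (k : ℝ) / Real.logb 2 (k : ℝ) with hx
  have hx0 : 0 < x := by positivity
  refine ⟨⌈x⌉₊, ?_, ?_⟩
  · have h1 := (Nat.ceil_lt_add_one hx0.le).le
    have h2 : 1 ≤ (k : ℝ) / Real.logb 2 (k : ℝ) := (one_le_div hL).2 hLk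
    have h3 : 10 * (k : ℝ) / Real.logb 2 (k : ℝ) = x + (k : ℝ) / Real.logb 2 (k : ℝ) := by
      rw [hx]; ring
    linarith
  · have hm : x ≤ (⌈x⌉₊ : ℝ) := Nat.le_ceil x
    generalize ⌈x⌉₊ = m at hm
    have hm0 : (0 : ℝ) < m := by linarith
    have hxl : x * Real.log k = 9 * k * Real.log 2 := by
      rw [hx, Real.logb]; field_simp
    have hs0 : 0 < Real.sqrt k := Real.sqrt_pos.2 hk0
    have hss : Real.sqrt k * Real.sqrt k = k := Real.mul_self_sqrt hk0.le
    have hls : Real.log (Real.sqrt k) = Real.log k / 2 := Real.log_sqrt hk0.le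
    have hle : Real.log k ≤ 2 * Real.sqrt k := by
      have := Real.log_le_self hs0.le
      linarith
    have hxs : Real.exp 1 * Real.sqrt k ≤ x := by
      have h1 : 9 * k * Real.log 2 ≤ x * (2 * Real.sqrt k) := by
        rw [← hxl]; gcongr
      have h2 : (9 * Real.log 2 * Real.sqrt k) * Real.sqrt k ≤ (2 * x) * Real.sqrt k := by
        calc _ = 9 * k * Real.log 2 := by rw [mul_assoc, hss]; ring
          _ ≤ _ := h1
          _ = _ := by ring
      have h3 := le_of_mul_le_mul_right h2 hs0
      nlinarith
    have hlm : 1 + Real.log k / 2 ≤ Real.log m := by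
      have := Real.log_le_log (by positivity) (hxs.trans hm)
      rwa [Real.log_mul (by positivity) hs0.ne', Real.log_exp, hls] at this
    have hfac : (m : ℝ) * (Real.log m - 1) ≤ Real.log (m.factorial : ℝ) := by
      have h := Real.pow_div_factorial_le_exp (m : ℝ) hm0.le m
      have hf : (0 : ℝ) < m.factorial := by exact_mod_cast m.factorial_pos
      have h2 := Real.log_le_log (by positivity) h
      rw [Real.log_exp, Real.log_div (by positivity) hf.ne', Real.log_pow] at h2
      linarith
    have hmain : (k : ℝ) * Real.log 2 ≤ Real.log (m.factorial : ℝ) := by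
      have h1 : x * (Real.log k / 2) ≤ m * (Real.log m - 1) := by
        apply mul_le_mul hm (by linarith) (by positivity) hm0.le
      have h2 : 0 < (k : ℝ) * Real.log 2 := by positivity
      linarith
    have hcard : 2 ^ k ≤ m.factorial := by
      rw [← Real.log_pow] at hmain
      have hf : (0 : ℝ) < m.factorial := by exact_mod_cast m.factorial_pos
      have := (Real.log_le_log_iff (by positivity) hf).1 hmain
      exact_mod_cast this
    have : Nonempty ((Fin k → Bool) ↪ Equiv.Perm (Fin m)) := by
      apply Function.Embedding.nonempty_of_card_le
      simpa [Fintype.card_perm] using hcard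
    obtain ⟨f⟩ := this
    exact ⟨f, f.injective⟩
end

section
/- There exists a real constant c > 0 such that for all natural numbers ι and k with ι ≥ 2 and ι·log₂(ι) ≤ k, there exists a natural number m ≥ 1 with 2^k ≤ (ι!)^m and m·ι ≤ c·k/log₂(ι). (Quantitative core of the paper's Theorem 'Treewidth-Awareness of 𝓡'': using blocks of ι-element orderings, treewidth k can be decreased to k' = m·ι ∈ O(k/log ι).) -/
theorem self_pow_le_factorial_sq (n : ℕ) : n ^ n ≤ (Nat.factorial n) ^ 2 := by
  have h1 := Finset.prod_range_add_one_eq_factorial n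
  have h2 := Finset.prod_range_reflect (fun x => x + 1) n
  rw [h1] at h2
  calc n ^ n = ∏ _i ∈ Finset.range n, n := by simp
    _ ≤ ∏ i ∈ Finset.range n, ((i + 1) * (n - 1 - i + 1)) := by
        apply Finset.prod_le_prod'
        intro i hi
        rw [Finset.mem_range] at hi
        obtain ⟨d, rfl⟩ := Nat.exists_eq_add_of_lt hi
        have : i + d + 1 - 1 - i + 1 = d + 1 := by omega
        rw [this]
        nlinarith [Nat.zero_le (i * d)]
    _ = (Nat.factorial n) ^ 2 := by
        rw [Finset.prod_mul_distrib, h1, h2, sq]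

/-- Quantitative core of "Treewidth-Awareness of 𝓡'": there is `c > 0` such that
for all `ι ≥ 2` and `k` with `ι·log₂ ι ≤ k`, there is `m ≥ 1` with
`2^k ≤ (ι!)^m` and `m·ι ≤ c·k/log₂ ι`. -/
theorem exists_blocks_factorial_pow_ge_two_pow :
    ∃ c : ℝ, 0 < c ∧ ∀ ι k : ℕ, 2 ≤ ι → (ι : ℝ) * Real.logb 2 (ι : ℝ) ≤ (k : ℝ) →
      ∃ m : ℕ, 1 ≤ m ∧ 2 ^ k ≤ (Nat.factorial ι) ^ m ∧
        ((m : ℝ) * (ι : ℝ)) ≤ c * (k : ℝ) / Real.logb 2 (ι : ℝ) := by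
  refine ⟨3, by norm_num, ?_⟩
  intro ι k hι hk
  have hιR : (2 : ℝ) ≤ ι := by exact_mod_cast hι
  have hL : 0 < Real.logb 2 (ι : ℝ) := Real.logb_pos (by norm_num) (by linarith)
  have hf : (0 : ℝ) < (Nat.factorial ι : ℝ) := by exact_mod_cast Nat.factorial_pos ι
  have key : (ι : ℝ) * Real.logb 2 (ι : ℝ) ≤ 2 * Real.logb 2 (Nat.factorial ι : ℝ) := by
    have h : ((ι : ℝ)) ^ ι ≤ (Nat.factorial ι : ℝ) ^ 2 := by
      exact_mod_cast self_pow_le_factorial_sq ι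
    have h' := Real.logb_le_logb_of_le (b := 2) (by norm_num) (by positivity) h
    rw [Real.logb_pow, Real.logb_pow] at h'
    exact_mod_cast h'
  set L := Real.logb 2 (ι : ℝ) with hLdef
  have hP : 0 < (ι : ℝ) * L := by positivity
  have hk0 : (0 : ℝ) < k := by linarith
  have hm1 := Nat.le_ceil (2 * (k : ℝ) / (ι * L))
  have hm2 := Nat.ceil_lt_add_one (a := 2 * (k : ℝ) / (ι * L)) (by positivity)
  have hm0 : 0 < ⌈2 * (k : ℝ) / (ι * L)⌉₊ := Nat.ceil_pos.mpr (by positivity)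
  generalize ⌈2 * (k : ℝ) / (ι * L)⌉₊ = m at *
  refine ⟨m, hm0, ?_, ?_⟩
  · have h : (2 : ℝ) ^ k ≤ (Nat.factorial ι : ℝ) ^ m := by
      rw [← Real.logb_le_logb (b := 2) (by norm_num) (by positivity) (by positivity),
        Real.logb_pow, Real.logb_pow, Real.logb_self_eq_one (by norm_num)]
      rw [div_le_iff₀ hP] at hm1
      have := mul_le_mul_of_nonneg_left key (Nat.cast_nonneg (α := ℝ) m)
      linarith
    exact_mod_cast h
  · rw [le_div_iff₀ hL]
    have : 2 * (k : ℝ) / (ι * L) * (ι * L) = 2 * k := by field_simp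
    nlinarith [mul_lt_mul_of_pos_right hm2 hP]
end

section
/- There exists a real constant c > 0 such that for all natural numbers ι and k with ι ≥ 2 and ι·log₂(ι) ≤ k, there exists a natural number m with m·ι ≤ c·k/log₂(ι) and an injective function from (Fin k → Bool) into Fin m → Equiv.Perm (Fin ι). (Combinatorial core of the ι-tight reduction 𝓡': all 2^k assignments over a bag of k variables can be encoded injectively by m blocks of orderings of ι elements each, using only O(k/log ι) ordering vertices in total.) -/
theorem pow_self_le_factorial_sq (n : ℕ) : n ^ n ≤ n.factorial ^ 2 := by
  have h1 : ∏ i ∈ Finset.range n, (n - 1 - i + 1) = n.factorial := by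
    rw [Finset.prod_range_reflect (fun i => i + 1) n, Finset.prod_range_add_one_eq_factorial]
  have h2 := Finset.prod_range_add_one_eq_factorial n
  calc n ^ n = ∏ i ∈ Finset.range n, n := by simp
    _ ≤ ∏ i ∈ Finset.range n, ((i + 1) * (n - 1 - i + 1)) := by
        apply Finset.prod_le_prod'
        intro i hi
        have hi := Finset.mem_range.mp hi
        obtain ⟨d, rfl⟩ : ∃ d, n = i + 1 + d := ⟨n - (i + 1), by omega⟩
        have : i + 1 + d - 1 - i = d := by omega
        rw [this]
        nlinarith [Nat.zero_le (i * d)]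
    _ = n.factorial ^ 2 := by rw [Finset.prod_mul_distrib, h1, h2, sq]

/-- Combinatorial core of the ι-tight reduction 𝓡': there is `c > 0` such that
for all `ι ≥ 2` and `k` with `ι·log₂ ι ≤ k`, there is `m` with `m·ι ≤ c·k/log₂ ι`
and an injection of the assignments `Fin k → Bool` into the block orderings
`Fin m → Equiv.Perm (Fin ι)`. -/
theorem exists_blocks_with_injection :
    ∃ c : ℝ, 0 < c ∧ ∀ ι k : ℕ, 2 ≤ ι → (ι : ℝ) * Real.logb 2 (ι : ℝ) ≤ (k : ℝ) →
      ∃ m : ℕ, ((m : ℝ) * (ι : ℝ)) ≤ c * (k : ℝ) / Real.logb 2 (ι : ℝ) ∧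
        ∃ f : (Fin k → Bool) → (Fin m → Equiv.Perm (Fin ι)), Function.Injective f := by
  refine ⟨3, by norm_num, fun ι k hι hk => ?_⟩
  have hι1 : (1 : ℝ) < ι := by exact_mod_cast hι
  have hι0 : (0 : ℝ) < ι := by linarith
  have hL : 0 < Real.logb 2 (ι : ℝ) := Real.logb_pos (by norm_num) hι1
  have hpow : (2 : ℝ) ^ (Real.logb 2 (ι : ℝ)) = ι :=
    Real.rpow_logb (by norm_num) (by norm_num) hι0
  set L := Real.logb 2 (ι : ℝ) with hLdef
  have hιL : 0 < (ι : ℝ) * L := mul_pos hι0 hL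
  refine ⟨⌈2 * (k : ℝ) / (ι * L)⌉₊, ?_, ?_⟩
  · have h := (Nat.ceil_lt_add_one (a := 2 * (k : ℝ) / (ι * L)) (by positivity)).le
    rw [le_div_iff₀ hL]
    calc _ = (⌈2 * (k : ℝ) / (ι * L)⌉₊ : ℝ) * (ι * L) := by ring
      _ ≤ (2 * (k : ℝ) / (ι * L) + 1) * (ι * L) := by gcongr
      _ = 2 * k + ι * L := by field_simp
      _ ≤ 3 * k := by linarith
  · have h := Nat.le_ceil (2 * (k : ℝ) / (ι * L))
    rw [div_le_iff₀ hιL] at h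
    generalize ⌈2 * (k : ℝ) / (ι * L)⌉₊ = m at h
    have h1 : ((2 : ℝ) ^ (2 * k)) ≤ (ι : ℝ) ^ (ι * m) := by
      rw [← Real.rpow_natCast, ← Real.rpow_natCast, ← hpow, ← Real.rpow_mul (by norm_num)]
      apply Real.rpow_le_rpow_of_exponent_le (by norm_num)
      push_cast
      linarith
    have h2 : 2 ^ (2 * k) ≤ ι ^ (ι * m) := by exact_mod_cast h1
    have h3 : 2 ^ k ≤ ι.factorial ^ m := by
      rw [← Nat.pow_le_pow_iff_left (n := 2) (by norm_num)]
      calc (2 ^ k) ^ 2 = 2 ^ (2 * k) := by rw [← pow_mul, mul_comm]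
        _ ≤ (ι ^ ι) ^ m := by rw [← pow_mul]; exact h2
        _ ≤ (ι.factorial ^ 2) ^ m := Nat.pow_le_pow_left (pow_self_le_factorial_sq ι) m
        _ = _ := by rw [← pow_mul, ← pow_mul, mul_comm]
    have h4 : Fintype.card (Fin k → Bool) ≤ Fintype.card (Fin m → Equiv.Perm (Fin ι)) := by
      simpa [Fintype.card_perm] using h3
    obtain ⟨f⟩ := Function.Embedding.nonempty_of_card_le h4
    exact ⟨f, f.injective⟩
end
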